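/- Let m := p−b−1 ≥ 1 and suppose 2 ≤ ℓ ≤ b+m. Then the trace of the linear endomorphism f ↦ ρ(g·f) of W equals (1/π_ℓ)·{ Σ_{k=0}^{min(m,ℓ)} ((b+1)_{m−k}/(m−k)!) · e_{ℓ−k}(n_1−1,…,n_ℓ−1) + (−1)^{ℓ+1} · (b−ℓ+1)_m / m! }, where (b−ℓ+1)_m = ∏_{i=0}^{m−1}(b−ℓ+1+i). -/

import Mathlib

open Finset MvPolynomial

noncomputable section

/-- Value of the elementary symmetric polynomial `e_k` at the family `v` restricted to `A`. -/
def esymVal {α F : Type*} [DecidableEq α] [CommRing F] (A : Finset α) (k : ℕ) (v : α → F) : F :=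
  ∑ B ∈ A.powersetCard k, ∏ i ∈ B, v i

/-- Pochhammer symbol `(a)_k = a (a+1) ⋯ (a+k-1)`. -/
def poch (a : ℚ) (k : ℕ) : ℚ := ∏ i ∈ Finset.range k, (a + (i : ℚ))

variable {p : ℕ}

/-- The index in `Fin (∑ t, n t)` of the `i`-th element of the `j`-th consecutive block. -/
def emb (n : Fin p → ℕ) (j : Fin p) (i : Fin (n j)) : Fin (∑ t, n t) :=
  ⟨(∑ t ∈ Finset.univ.filter (fun t => t < j), n t) + i, by
    have hj : j ∉ Finset.univ.filter (fun t => t < j) := by simp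
    have h2 : ∑ t ∈ insert j (Finset.univ.filter (fun t => t < j)), n t ≤ ∑ t, n t :=
      Finset.sum_le_sum_of_subset (Finset.subset_univ _)
    rw [Finset.sum_insert hj] at h2
    have := i.isLt
    omega⟩

/-- The Young subgroup: permutations mapping each block onto itself. -/
def youngGroup (n : Fin p → ℕ) : Finset (Equiv.Perm (Fin (∑ t, n t))) :=
  Finset.univ.filter fun w => ∀ (j : Fin p) (i : Fin (n j)), ∃ i' : Fin (n j),
    w (emb n j i) = emb n j i'

/-- The action of a permutation of the variables on polynomials, as a linear map. -/
def permAct {σ : Type*} (w : Equiv.Perm σ) :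
    MvPolynomial σ ℚ →ₗ[ℚ] MvPolynomial σ ℚ :=
  (MvPolynomial.rename ⇑w).toLinearMap

/-- Averaging operator over the Young subgroup. -/
def rho (n : Fin p → ℕ) :
    MvPolynomial (Fin (∑ t, n t)) ℚ →ₗ[ℚ] MvPolynomial (Fin (∑ t, n t)) ℚ :=
  ((youngGroup n).card : ℚ)⁻¹ • ∑ h ∈ youngGroup n, permAct h

/-- The alternating (Vandermonde) polynomial in the variables `x_{t 0}, …, x_{t b}`. -/
def Delta {N b : ℕ} (t : Fin (b + 1) → Fin N) : MvPolynomial (Fin N) ℚ :=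
  ∏ q ∈ Finset.univ.filter (fun q : Fin (b + 1) × Fin (b + 1) => q.1 < q.2),
    (X (t q.1) - X (t q.2))

/-- The span of all `Δ(x_{i₁},…,x_{i_{b+1}})` with `i₁ < ⋯ < i_{b+1}`. -/
def hookSpan (N b : ℕ) : Submodule ℚ (MvPolynomial (Fin N) ℚ) :=
  Submodule.span ℚ {f | ∃ t : Fin (b + 1) → Fin N, StrictMono t ∧ f = Delta t}

/-- The first `ℓ` block labels. -/
def firstL (p ℓ : ℕ) : Finset (Fin p) := Finset.univ.filter fun i => (i : ℕ) < ℓ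

/-!
Choose a representative of every block, so that the cycle permutes the representatives, and a block
`z` outside the cycle. For `J` a `b`-subset of the other blocks, average over the Young subgroup the
Vandermonde polynomial in the variables of the representatives of `insert z J`. These averages form
a basis of the invariants, and evaluation at a point which is constant on blocks, with distinct
nonzero values on the blocks in `J` and zero elsewhere, is up to normalization the dual functional.
In a diagonal entry of the operator a random block-preserving permutation fixes or moves each
representative independently, and the Vandermonde determinant survives in two cases only: no
representative of a cycle block in `J` is fixed, with probability the product of the `(n_i-1)/n_i`
over these blocks, or all cycle blocks lie in `J` and all their representatives are fixed, with
probability the product of the `1/n_i`; the determinant then acquires the sign of the cycle. Summing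
over `J` gives the two terms of the formula.
-/

open scoped BigOperators Nat

/-! ### Pochhammer symbols and subset sums -/

theorem poch_natCast_add_one_div_factorial (b k : ℕ) :
    poch ((b : ℚ) + 1) k / (k ! : ℚ) = (b + k).choose b := by
  have hpoch : poch ((b : ℚ) + 1) k = (b + 1).ascFactorial k := by
    rw [Nat.ascFactorial_eq_prod_range, poch]
    push_cast
    rfl
  rw [hpoch, Nat.ascFactorial_eq_factorial_mul_choose, Nat.choose_symm_add, Nat.cast_mul,
    mul_div_cancel_left₀ _ (mod_cast k.factorial_ne_zero)]

theorem poch_natCast_sub_add_one_div_factorial {b ℓ m : ℕ} (hℓ : ℓ ≤ b + m) :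
    poch ((b : ℚ) - ℓ + 1) m / (m ! : ℚ) =
      if ℓ ≤ b then ((b + m - ℓ).choose (b - ℓ) : ℚ) else 0 := by
  split_ifs with h
  · rw [← Nat.cast_sub h, poch_natCast_add_one_div_factorial, Nat.sub_add_comm h]
  · have hzero : poch ((b : ℚ) - ℓ + 1) m = 0 := by
      refine prod_eq_zero (i := ℓ - (b + 1)) (mem_range.2 (by omega)) ?_
      rw [Nat.cast_sub (by omega)]
      push_cast
      ring
    rw [hzero, zero_div]

theorem sum_range_choose_mul_eq_sum_poch {b m ℓ : ℕ} (hℓ : ℓ ≤ b + m) (e : ℕ → ℚ) :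
    ∑ k ∈ range (ℓ + 1), ((b + m - ℓ + k).choose b : ℚ) * e k =
      ∑ k ∈ range (min m ℓ + 1), poch ((b : ℚ) + 1) (m - k) / ((m - k) ! : ℚ) * e (ℓ - k) := by
  rw [← sum_range_reflect]
  refine (sum_subset_zero_on_sdiff (range_subset_range.2 (by omega)) ?_ ?_).symm
  · intro k hk
    simp only [mem_sdiff, mem_range] at hk
    rw [Nat.choose_eq_zero_of_lt (by omega), Nat.cast_zero, zero_mul]
  · intro k hk
    rw [mem_range] at hk
    rw [poch_natCast_add_one_div_factorial, show ℓ + 1 - 1 - k = ℓ - k by omega,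
      show b + m - ℓ + (ℓ - k) = b + (m - k) by omega]

section SubsetSums

variable {ι K : Type*} [DecidableEq ι] [Field K]

theorem prod_inter_sub_one_div (J L : Finset ι) {x : ι → K} (hx : ∀ j ∈ L, x j ≠ 0) :
    ∏ j ∈ J ∩ L, (x j - 1) / x j =
      (∏ j ∈ L, x j)⁻¹ *
        ∑ B ∈ L.powerset, if Disjoint (L \ B) J then ∏ j ∈ B, (x j - 1) else 0 := by
  have hfactor : ∀ j ∈ L, (if j ∈ J then (x j - 1) / x j else 1) =
      (x j)⁻¹ * ((x j - 1) + if j ∉ J then 1 else 0) := by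
    intro j hj
    have := hx j hj
    split_ifs <;> field_simp <;> ring
  rw [inter_comm, ← prod_ite_mem, prod_congr rfl hfactor, prod_mul_distrib, prod_inv_distrib,
    prod_add]
  simp only [prod_boole, ← disjoint_left, mul_ite, mul_one, mul_zero]

theorem card_filter_powersetCard_disjoint (U A : Finset ι) (b : ℕ) (hA : A ⊆ U) :
    #{J ∈ U.powersetCard b | Disjoint A J} = (#U - #A).choose b := by
  rw [← card_sdiff_of_subset hA, ← card_powersetCard]
  congr 1
  ext J
  simp only [mem_filter, mem_powersetCard, subset_sdiff, disjoint_comm (a := A)]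
  tauto

theorem sum_powersetCard_prod_inter_sub_one_div {U L : Finset ι} (hLU : L ⊆ U) {x : ι → K}
    (hx : ∀ j ∈ L, x j ≠ 0) (b : ℕ) :
    ∑ J ∈ U.powersetCard b, ∏ j ∈ J ∩ L, (x j - 1) / x j =
      (∏ j ∈ L, x j)⁻¹ * ∑ k ∈ range (#L + 1),
        ((#U - #L + k).choose b : K) * esymVal L k (fun j => x j - 1) := by
  simp only [prod_inter_sub_one_div _ _ hx, ← mul_sum, sum_comm (t := L.powerset)]
  rw [sum_powerset]
  congr 1
  refine sum_congr rfl fun k _ => ?_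
  rw [esymVal, mul_sum]
  refine sum_congr rfl fun B hB => ?_
  obtain ⟨hBL, rfl⟩ := mem_powersetCard.1 hB
  have := card_le_card hBL
  have := card_le_card hLU
  rw [← sum_filter, sum_const, nsmul_eq_mul,
    card_filter_powersetCard_disjoint _ _ _ (sdiff_subset.trans hLU), card_sdiff_of_subset hBL,
    show #U - (#L - #B) = #U - #L + #B by omega]

theorem sum_powersetCard_ite_subset {U L : Finset ι} (hLU : L ⊆ U) (b : ℕ) (c : K) :
    ∑ J ∈ U.powersetCard b, (if L ⊆ J then c else 0) =
      (if #L ≤ b then ((#U - #L).choose (b - #L) : K) else 0) * c := by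
  rw [← sum_filter, sum_const, nsmul_eq_mul]
  split_ifs with h
  · rw [card_filter_powersetCard_subset _ _ _ hLU h]
  · rw [filter_false_of_mem, card_empty, Nat.cast_zero]
    intro J hJ hLJ
    exact h ((mem_powersetCard.1 hJ).2 ▸ card_le_card hLJ)

end SubsetSums

/-! ### Permutations of tuples and Vandermonde determinants -/

theorem exists_perm_comp_eq_of_range_eq {ι γ : Type*} {u v : ι → γ} (hu : u.Injective)
    (hv : v.Injective) (h : Set.range u = Set.range v) : ∃ σ : Equiv.Perm ι, u = v ∘ σ := by
  refine ⟨(Equiv.ofInjective u hu).trans ((Equiv.setCongr h).trans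
    (Equiv.ofInjective v hv).symm), funext fun i => ?_⟩
  exact (Equiv.apply_ofInjective_symm hv (Equiv.setCongr h (Equiv.ofInjective u hu i))).symm

theorem exists_perm_comp_eq_and_sign_eq {ι γ : Type*} [Fintype ι] [DecidableEq ι] [Fintype γ]
    [DecidableEq γ] {u : ι → γ} (hu : u.Injective) {π : Equiv.Perm γ}
    (hπ : (π.support : Set γ) ⊆ Set.range u) :
    ∃ σ : Equiv.Perm ι, π ∘ u = u ∘ σ ∧ σ.sign = π.sign := by
  have hmoved : ∀ x, π x ≠ x → x ∈ Set.range u := fun x hx =>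
    hπ (mem_coe.2 (Equiv.Perm.mem_support.2 hx))
  have hrange : ∀ x, π x ∈ Set.range u ↔ x ∈ Set.range u := by
    intro x
    by_cases hx : π x = x
    · rw [hx]
    · exact iff_of_true (hmoved _ fun h => hx (π.injective h)) (hmoved _ hx)
  refine ⟨(Equiv.ofInjective u hu).symm.permCongr (π.subtypePerm hrange), funext fun i => ?_, ?_⟩
  · simp [Equiv.permCongr_apply, Equiv.apply_ofInjective_symm]
  · classical
    rw [Equiv.Perm.sign_permCongr]
    convert Equiv.Perm.sign_subtypePerm π hrange hmoved

theorem exists_mem_apply_notMem_of_isCycle {γ : Type*} [Fintype γ] [DecidableEq γ]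
    {π : Equiv.Perm γ} (hπ : π.IsCycle) {A : Finset γ} (hA : A ⊆ π.support) (hne : A.Nonempty)
    (hA' : A ≠ π.support) : ∃ x ∈ A, π x ∉ A := by
  by_contra! hinv
  obtain ⟨x, hx⟩ := hne
  refine hA' (hA.antisymm fun y hy => ?_)
  obtain ⟨k, rfl⟩ := hπ.exists_pow_eq (Equiv.Perm.mem_support.1 (hA hx))
    (Equiv.Perm.mem_support.1 hy)
  rw [Equiv.Perm.coe_pow]
  exact Set.MapsTo.iterate (s := (A : Set γ)) (fun z hz => hinv z hz) k hx

section Vandermonde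

variable {R : Type*} [CommRing R]

theorem det_vandermonde_comp_perm {m : ℕ} (v : Fin m → R) (σ : Equiv.Perm (Fin m)) :
    (Matrix.vandermonde (v ∘ σ)).det = (σ.sign : ℤ) * (Matrix.vandermonde v).det :=
  Matrix.det_permute σ (Matrix.vandermonde v)

theorem det_vandermonde_eq_sum_cons {m : ℕ} (a : R) (v : Fin (m + 1) → R) :
    (Matrix.vandermonde v).det = ∑ i : Fin (m + 1), (-1) ^ (i : ℕ) *
      (Matrix.vandermonde (Fin.cons a (v ∘ i.succAbove) : Fin (m + 1) → R)).det := by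
  -- Prepend a second column of ones to the Vandermonde rows of `(a, v)`; the determinant
  -- vanishes, and its expansion along the new column is the claim.
  let w : Fin (m + 2) → R := Fin.cons a v
  let M : Matrix (Fin (m + 2)) (Fin (m + 2)) R :=
    .of fun i => Fin.cons 1 (Matrix.vandermonde w i ∘ Fin.castSucc)
  have hdet : M.det = 0 :=
    Matrix.det_zero_of_column_eq (i := 0) (j := 1) (by simp) fun k => by
      rw [← Fin.succ_zero_eq_one]
      simp [M, Matrix.vandermonde_apply]
  have hminor : ∀ i, (M.submatrix (Fin.succAbove i) Fin.succ).det =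
      (Matrix.vandermonde (w ∘ i.succAbove)).det := fun i => by
    congr 1
  have hw : ∀ i : Fin (m + 1), w ∘ i.succ.succAbove = Fin.cons a (v ∘ i.succAbove) := by
    intro i
    ext k
    cases k using Fin.cases <;> simp [w]
  have hw0 : w ∘ (0 : Fin (m + 2)).succAbove = v := by
    ext k
    simp [w]
  have hM0 : ∀ i, M i 0 = 1 := fun i => rfl
  rw [Matrix.det_succ_column_zero, Fin.sum_univ_succ] at hdet
  simpa only [hminor, hw, hw0, hM0, Fin.val_zero, pow_zero, one_mul, mul_one, Fin.val_succ,
    pow_succ, mul_neg, neg_mul, sum_neg_distrib, add_neg_eq_zero] using hdet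

end Vandermonde

theorem trace_restrict_eq_sum_of_dual {R E ι : Type*} [CommRing R] [AddCommGroup E] [Module R E]
    [Fintype ι] [DecidableEq ι] {W : Submodule R E} [Module.Free R W] [Module.Finite R W]
    {T : E →ₗ[R] E} (hT : ∀ f ∈ W, T f ∈ W) {D : ι → E} (hD : ∀ i, D i ∈ W)
    {ε : ι → E →ₗ[R] R} (hε : ∀ i j, ε i (D j) = if i = j then 1 else 0)
    (hspan : ∀ f ∈ W, T f ∈ Submodule.span R (Set.range D)) :
    LinearMap.trace R W (T.restrict hT) = ∑ i, ε i (T (D i)) := by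
  have hexpand : T.restrict hT =
      ∑ i, (ε i ∘ₗ T ∘ₗ W.subtype).smulRight (⟨D i, hD i⟩ : W) := by
    ext f
    obtain ⟨c, hc⟩ := (Submodule.mem_span_range_iff_exists_fun R).1 (hspan f f.2)
    have hcoeff : ∀ i, ε i (T f) = c i := fun i => by simp [← hc, hε]
    simp [hcoeff, hc]
  rw [hexpand, map_sum]
  simp

/-! ### Averages over block-preserving permutations -/

section BlockPerms

variable {α β : Type*} [Fintype α] [DecidableEq α] [DecidableEq β]

/-- The permutations preserving each fibre of `blk`: the Young subgroup of the set partition of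
`α` into the blocks `blk ⁻¹' {j}`. -/
def blockPerms (blk : α → β) : Finset (Equiv.Perm α) := {w | ∀ a, blk (w a) = blk a}

variable {blk : α → β}

theorem mem_blockPerms {w : Equiv.Perm α} : w ∈ blockPerms blk ↔ ∀ a, blk (w a) = blk a := by
  simp [blockPerms]

theorem blockPerms_nonempty (blk : α → β) : (blockPerms blk).Nonempty :=
  ⟨1, mem_blockPerms.2 fun _ => rfl⟩

theorem mul_mem_blockPerms_iff {h k : Equiv.Perm α} (hk : k ∈ blockPerms blk) :
    h * k ∈ blockPerms blk ↔ h ∈ blockPerms blk := by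
  simp only [mem_blockPerms, Equiv.Perm.mul_apply] at hk ⊢
  rw [k.surjective.forall (p := fun a => blk (h a) = blk a)]
  simp only [hk]

theorem sum_blockPerms_mul_right {M : Type*} [AddCommMonoid M] {k : Equiv.Perm α}
    (hk : k ∈ blockPerms blk) (F : Equiv.Perm α → M) :
    ∑ h ∈ blockPerms blk, F (h * k) = ∑ h ∈ blockPerms blk, F h :=
  sum_equiv (Equiv.mulRight k) (fun _ => (mul_mem_blockPerms_iff hk).symm) fun _ _ => rfl

theorem exists_mem_blockPerms_map_section {c s : β → α} (hc : ∀ j, blk (c j) = j)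
    (hs : ∀ j, blk (s j) = j) : ∃ h ∈ blockPerms blk, ∀ j, h (c j) = s j := by
  let τ : α → α := fun a => Equiv.swap (s (blk a)) (c (blk a)) a
  have hblk : ∀ a, blk (τ a) = blk a := fun a => by
    simp only [τ, Equiv.swap_apply_def]
    split_ifs <;> simp only [hc, hs]
  have hinv : Function.Involutive τ := fun a => by
    change Equiv.swap (s (blk (τ a))) (c (blk (τ a))) (τ a) = a
    rw [hblk]
    exact Equiv.swap_apply_self ..
  exact ⟨hinv.toPerm, mem_blockPerms.2 hblk, fun j => by simp [τ, hc]⟩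

variable [Fintype β]

theorem expect_blockPerms_comp_section {K : Type*} [Semifield K] [CharZero K] {s : β → α}
    (hs : ∀ j, blk (s j) = j) (F : (β → α) → K) :
    𝔼 h ∈ blockPerms blk, F (h ∘ s) =
      𝔼 c ∈ Fintype.piFinset fun j => ({a | blk a = j} : Finset α), F c := by
  set C := Fintype.piFinset fun j => ({a | blk a = j} : Finset α)
  have hC : ∀ c, c ∈ C ↔ ∀ j, blk (c j) = j := fun c => by simp [C]
  have hconst : ∀ c ∈ C, 𝔼 h ∈ blockPerms blk, F (h ∘ c) = 𝔼 h ∈ blockPerms blk, F (h ∘ s) := by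
    intro c hc
    obtain ⟨k, hk, hks⟩ := exists_mem_blockPerms_map_section hs ((hC c).1 hc)
    obtain rfl : k ∘ s = c := funext hks
    exact expect_equiv (Equiv.mulRight k) (fun _ => (mul_mem_blockPerms_iff hk).symm) fun _ _ => rfl
  have hreindex : ∀ h ∈ blockPerms blk, 𝔼 c ∈ C, F (h ∘ c) = 𝔼 c ∈ C, F c := by
    intro h hh
    refine expect_equiv (Equiv.arrowCongr (.refl β) h) (fun c => ?_) fun _ _ => rfl
    simp only [hC, Equiv.arrowCongr_apply, Equiv.refl_symm, Equiv.coe_refl, Function.comp_apply,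
      id, mem_blockPerms.1 hh]
  calc 𝔼 h ∈ blockPerms blk, F (h ∘ s)
      = 𝔼 c ∈ C, 𝔼 h ∈ blockPerms blk, F (h ∘ c) := by
        rw [expect_congr rfl hconst, expect_const ⟨s, (hC s).2 hs⟩]
    _ = 𝔼 h ∈ blockPerms blk, 𝔼 c ∈ C, F (h ∘ c) := expect_comm ..
    _ = 𝔼 c ∈ C, F c := by
        rw [expect_congr rfl hreindex, expect_const (blockPerms_nonempty blk)]

theorem expect_piFinset_prod {ι K : Type*} {κ : ι → Type*} [Fintype ι] [DecidableEq ι] [Field K]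
    [CharZero K] (t : ∀ i, Finset (κ i)) (f : ∀ i, κ i → K) :
    𝔼 c ∈ Fintype.piFinset t, ∏ i, f i (c i) = ∏ i, 𝔼 a ∈ t i, f i a := by
  simp only [expect_eq_sum_div_card, prod_div_distrib, prod_univ_sum, Fintype.card_piFinset,
    Nat.cast_prod]

theorem expect_blockPerms_ite_forall {K : Type*} [Field K] [CharZero K] {s : β → α}
    (hs : ∀ j, blk (s j) = j) (A : Finset β) (P : β → α → Prop) [∀ j, DecidablePred (P j)] :
    𝔼 h ∈ blockPerms blk, (if ∀ j ∈ A, P j (h (s j)) then (1 : K) else 0) =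
      ∏ j ∈ A, (#{a | blk a = j ∧ P j a} / #{a | blk a = j} : K) := by
  have hfactor : ∀ c : β → α, (if ∀ j ∈ A, P j (c j) then (1 : K) else 0) =
      ∏ j, if j ∈ A then (if P j (c j) then 1 else 0) else 1 := fun c => by
    rw [Fintype.prod_ite_mem, prod_boole]
    congr
  calc _ = 𝔼 c ∈ Fintype.piFinset fun j => ({a | blk a = j} : Finset α),
        ∏ j, (if j ∈ A then (if P j (c j) then 1 else 0) else 1 : K) := by
        rw [← expect_blockPerms_comp_section hs]
        exact expect_congr rfl fun h _ => hfactor (h ∘ s)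
    _ = _ := by
        rw [expect_piFinset_prod _ fun j a => (if j ∈ A then (if P j a then 1 else 0) else 1 : K),
          ← Fintype.prod_ite_mem A]
        refine prod_congr rfl fun j _ => ?_
        split_ifs
        · rw [expect_eq_sum_div_card, sum_boole, filter_filter]
        · exact expect_const ⟨s j, mem_filter.2 ⟨mem_univ _, hs j⟩⟩ 1

theorem expect_blockPerms_forall_apply_section_eq {s : β → α} (hs : ∀ j, blk (s j) = j)
    (A : Finset β) :
    𝔼 h ∈ blockPerms blk, (if ∀ j ∈ A, h (s j) = s j then (1 : ℚ) else 0) =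
      (∏ j ∈ A, (#{a | blk a = j} : ℚ))⁻¹ := by
  have hcard : ∀ j, #{a | blk a = j ∧ a = s j} = 1 := fun j =>
    card_eq_one.2 ⟨s j, by ext a; simp +contextual [hs]⟩
  simp only [expect_blockPerms_ite_forall hs A fun j a => a = s j, hcard, Nat.cast_one, one_div,
    prod_inv_distrib]

theorem expect_blockPerms_forall_apply_section_ne {s : β → α} (hs : ∀ j, blk (s j) = j)
    (A : Finset β) :
    𝔼 h ∈ blockPerms blk, (if ∀ j ∈ A, h (s j) ≠ s j then (1 : ℚ) else 0) =
      ∏ j ∈ A, ((#{a | blk a = j} - 1) / #{a | blk a = j} : ℚ) := by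
  have hcard : ∀ j, (#{a | blk a = j ∧ a ≠ s j} : ℚ) = #{a | blk a = j} - 1 := by
    intro j
    have hmem : s j ∈ ({a | blk a = j} : Finset α) := mem_filter.2 ⟨mem_univ _, hs j⟩
    rw [filter_and_not, filter_eq', if_pos (mem_univ _), sdiff_singleton_eq_erase,
      cast_card_erase_of_mem hmem]
  simp only [expect_blockPerms_ite_forall hs A fun j a => a ≠ s j, hcard]

end BlockPerms

/-! ### Vandermonde polynomials and their block averages -/

section VandermondePoly

variable {α : Type*} {m : ℕ}

/-- The Vandermonde determinant in the variables `x_{t 0}, …, x_{t (m - 1)}`, equal to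
`∏_{i < j} (x_{t j} - x_{t i})`; it is the paper's `Δ(x_{t (m - 1)}, …, x_{t 0})`. -/
def vandermondePoly (t : Fin m → α) : MvPolynomial α ℚ :=
  (Matrix.vandermonde fun i => X (t i)).det

/-- The span of all Vandermonde polynomials in `b + 1` of the variables, realizing the hook
representation `[N - b, 1^b]`. -/
def vandermondeSpan (α : Type*) (b : ℕ) : Submodule ℚ (MvPolynomial α ℚ) :=
  Submodule.span ℚ (Set.range (vandermondePoly : (Fin (b + 1) → α) → MvPolynomial α ℚ))

theorem aeval_vandermondePoly {R : Type*} [CommRing R] [Algebra ℚ R] (v : α → R) (t : Fin m → α) :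
    aeval v (vandermondePoly t) = (Matrix.vandermonde (v ∘ t)).det := by
  rw [vandermondePoly, AlgHom.map_det]
  congr 1
  ext i j
  simp [Matrix.vandermonde_apply]

theorem aeval_permAct (v : α → ℚ) (w : Equiv.Perm α) (f : MvPolynomial α ℚ) :
    aeval v (permAct w f) = aeval (v ∘ w) f :=
  aeval_rename w v f

theorem permAct_vandermondePoly (w : Equiv.Perm α) (t : Fin m → α) :
    permAct w (vandermondePoly t) = vandermondePoly (w ∘ t) := by
  change rename w _ = _
  rw [rename_eq_aeval, aeval_vandermondePoly]
  rfl

theorem permAct_mem_vandermondeSpan (w : Equiv.Perm α) {f : MvPolynomial α ℚ}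
    (hf : f ∈ vandermondeSpan α m) : permAct w f ∈ vandermondeSpan α m := by
  rw [← Submodule.mem_comap]
  refine Submodule.span_le.2 ?_ hf
  rintro _ ⟨t, rfl⟩
  exact Submodule.subset_span ⟨w ∘ t, (permAct_vandermondePoly w t).symm⟩

theorem vandermondePoly_comp_perm (t : Fin m → α) (σ : Equiv.Perm (Fin m)) :
    vandermondePoly (t ∘ σ) = (σ.sign : ℤ) • vandermondePoly t := by
  rw [zsmul_eq_mul]
  exact det_vandermonde_comp_perm (fun i => X (t i)) σ

theorem vandermondePoly_eq_zero_of_not_injective {t : Fin m → α} (ht : ¬t.Injective) :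
    vandermondePoly t = 0 := by
  simp only [Function.Injective, not_forall] at ht
  obtain ⟨i, j, hij, hne⟩ := ht
  exact Matrix.det_vandermonde_eq_zero_iff.2 ⟨i, j, congrArg X hij, hne⟩

theorem vandermondePoly_eq_sum_cons (a : α) (t : Fin (m + 1) → α) :
    vandermondePoly t = ∑ i : Fin (m + 1),
      (-1 : ℤ) ^ (i : ℕ) • vandermondePoly (Fin.cons a (t ∘ i.succAbove) : Fin (m + 1) → α) := by
  rw [vandermondePoly, det_vandermonde_eq_sum_cons (X a)]
  refine sum_congr rfl fun i _ => ?_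
  rw [zsmul_eq_mul, vandermondePoly]
  push_cast
  congr 3
  exact (Fin.comp_cons X a (t ∘ i.succAbove)).symm

end VandermondePoly

section BlockAvg

variable {α β : Type*} [Fintype α] [DecidableEq α] [DecidableEq β]

/-- The averaging operator over `blockPerms blk`. -/
def blockAvg (blk : α → β) : MvPolynomial α ℚ →ₗ[ℚ] MvPolynomial α ℚ :=
  ((blockPerms blk).card : ℚ)⁻¹ • ∑ h ∈ blockPerms blk, permAct h

variable {blk : α → β}

theorem aeval_blockAvg (v : α → ℚ) (f : MvPolynomial α ℚ) :
    aeval v (blockAvg blk f) = 𝔼 h ∈ blockPerms blk, aeval v (permAct h f) := by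
  simp only [blockAvg, LinearMap.smul_apply, LinearMap.sum_apply, map_smul, map_sum,
    expect_eq_sum_div_card, smul_eq_mul, div_eq_inv_mul]

theorem aeval_comp_blockAvg (v : β → ℚ) (f : MvPolynomial α ℚ) :
    aeval (v ∘ blk) (blockAvg blk f) = aeval (v ∘ blk) f := by
  have hconst : ∀ h ∈ blockPerms blk, aeval (v ∘ blk) (permAct h f) = aeval (v ∘ blk) f := by
    intro h hh
    have hblk : blk ∘ h = blk := funext (mem_blockPerms.1 hh)
    rw [aeval_permAct, Function.comp_assoc, hblk]
  rw [aeval_blockAvg, expect_congr rfl hconst, expect_const (blockPerms_nonempty blk)]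

theorem blockAvg_permAct {k : Equiv.Perm α} (hk : k ∈ blockPerms blk) (f : MvPolynomial α ℚ) :
    blockAvg blk (permAct k f) = blockAvg blk f := by
  have hmul : ∀ h : Equiv.Perm α, permAct h (permAct k f) = permAct (h * k) f := fun h =>
    rename_rename k h f
  simp only [blockAvg, LinearMap.smul_apply, LinearMap.sum_apply, hmul,
    sum_blockPerms_mul_right hk (fun h => permAct h f)]

variable {m : ℕ}

theorem blockAvg_vandermondePoly_eq_zero {t : Fin m → α} (ht : ¬(blk ∘ t).Injective) :
    blockAvg blk (vandermondePoly t) = 0 := by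
  by_cases ht' : t.Injective
  · simp only [Function.Injective, not_forall] at ht
    obtain ⟨i, j, hij, hne⟩ := ht
    have hk : Equiv.swap (t i) (t j) ∈ blockPerms blk := mem_blockPerms.2 fun a => by
      rw [Equiv.swap_apply_def]
      split_ifs with h h
      exacts [h ▸ hij.symm, h ▸ hij, rfl]
    have hswap : t ∘ Equiv.swap i j = Equiv.swap (t i) (t j) ∘ t := funext fun x =>
      ht'.map_swap ..
    have hneg := blockAvg_permAct hk (vandermondePoly t)
    rw [permAct_vandermondePoly, ← hswap, vandermondePoly_comp_perm,
      Equiv.Perm.sign_swap hne, Units.val_neg, Units.val_one, neg_smul, one_smul, map_neg] at hneg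
    exact self_eq_neg.1 hneg.symm
  · rw [vandermondePoly_eq_zero_of_not_injective ht', map_zero]

theorem blockAvg_vandermondePoly_section {s : β → α} (hs : ∀ j, blk (s j) = j) {t : Fin m → α}
    (ht : (blk ∘ t).Injective) :
    blockAvg blk (vandermondePoly t) = blockAvg blk (vandermondePoly (s ∘ blk ∘ t)) := by
  let c : β → α := Function.extend (blk ∘ t) t s
  have hct : ∀ i, c (blk (t i)) = t i := ht.extend_apply t s
  have hc : ∀ j, blk (c j) = j := fun j => by
    by_cases hj : ∃ i, (blk ∘ t) i = j
    · obtain ⟨i, rfl⟩ := hj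
      exact congrArg blk (hct i)
    · exact (congrArg blk (Function.extend_apply' _ _ _ hj)).trans (hs j)
  obtain ⟨k, hk, hks⟩ := exists_mem_blockPerms_map_section hc hs
  have hkt : k ∘ t = s ∘ blk ∘ t := funext fun i =>
    (congrArg k (hct i)).symm.trans (hks _)
  rw [← hkt, ← permAct_vandermondePoly, blockAvg_permAct hk]

end BlockAvg

section BlockInvariant

variable {α β : Type*}

/-- An enumeration of `insert z J`, for `z ∉ J`, starting with `z`. -/
def consEnum (z : β) (J : Finset β) : Fin (#J + 1) → β :=
  Fin.cons z fun i => J.equivFin.symm i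

theorem range_consEnum (z : β) (J : Finset β) : Set.range (consEnum z J) = insert z ↑J := by
  have henum : Set.range (fun i => (J.equivFin.symm i : β)) = J := by
    rw [← Function.comp_def, J.equivFin.symm.surjective.range_comp, Subtype.range_coe]
  rw [consEnum, Fin.range_cons, henum]

theorem injective_consEnum {z : β} {J : Finset β} (hz : z ∉ J) : (consEnum z J).Injective :=
  Fin.cons_injective_iff.2 ⟨fun ⟨i, hi⟩ => hz (hi ▸ (J.equivFin.symm i).2),
    Subtype.val_injective.comp J.equivFin.symm.injective⟩

theorem exists_vandermondePoly_comp_eq_zsmul {b : ℕ} (s : β → α) {z : β} {u : Fin (b + 1) → β}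
    (hu : u.Injective) {J : Finset β} (hz : z ∉ J) (hJ : #J = b)
    (hrange : Set.range u = insert z ↑J) :
    ∃ ε : ℤ, vandermondePoly (s ∘ u) = ε • vandermondePoly (s ∘ consEnum z J) := by
  subst hJ
  obtain ⟨σ, rfl⟩ := exists_perm_comp_eq_of_range_eq hu (injective_consEnum hz)
    (hrange.trans (range_consEnum z J).symm)
  exact ⟨σ.sign, vandermondePoly_comp_perm (s ∘ consEnum z J) σ⟩

variable [Fintype α] [DecidableEq α] [DecidableEq β]

/-- The block average of the Vandermonde polynomial in the block representatives `x_{s j}`,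
`j ∈ insert z J`. For fixed `z` these form a basis of the invariants in `vandermondeSpan`. -/
def blockInvariant (blk : α → β) (s : β → α) (z : β) (J : Finset β) : MvPolynomial α ℚ :=
  blockAvg blk (vandermondePoly (s ∘ consEnum z J))

variable {blk : α → β} {s : β → α} {b : ℕ}

theorem blockAvg_mem_vandermondeSpan {f : MvPolynomial α ℚ} (hf : f ∈ vandermondeSpan α b) :
    blockAvg blk f ∈ vandermondeSpan α b := by
  simp only [blockAvg, LinearMap.smul_apply, LinearMap.sum_apply]
  exact Submodule.smul_mem _ _ (sum_mem fun w _ => permAct_mem_vandermondeSpan w hf)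

theorem blockInvariant_mem_vandermondeSpan (z : β) {J : Finset β} (hJ : #J = b) :
    blockInvariant blk s z J ∈ vandermondeSpan α b := by
  subst hJ
  exact blockAvg_mem_vandermondeSpan (Submodule.subset_span ⟨_, rfl⟩)

variable [Fintype β]

theorem blockAvg_vandermondePoly_cons_mem_span (hs : ∀ j, blk (s j) = j) (z : β) (t : Fin b → α) :
    blockAvg blk (vandermondePoly (Fin.cons (s z) t : Fin (b + 1) → α)) ∈
      Submodule.span ℚ (Set.range fun J : powersetCard b ({z}ᶜ : Finset β) =>
        blockInvariant blk s z J) := by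
  by_cases ht : (blk ∘ (Fin.cons (s z) t : Fin (b + 1) → α)).Injective
  swap
  · rw [blockAvg_vandermondePoly_eq_zero ht]
    exact zero_mem _
  rw [blockAvg_vandermondePoly_section hs ht]
  rw [Fin.comp_cons, hs] at ht ⊢
  obtain ⟨hz, hinj⟩ := Fin.cons_injective_iff.1 ht
  have hJ : univ.image (blk ∘ t) ∈ powersetCard b ({z}ᶜ : Finset β) := by
    rw [mem_powersetCard, card_image_of_injective _ hinj, card_univ, Fintype.card_fin]
    exact ⟨subset_compl_singleton.2 (by simpa using hz), rfl⟩
  obtain ⟨hzJ, hJcard⟩ := mem_powersetCard.1 hJ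
  obtain ⟨ε, hε⟩ := exists_vandermondePoly_comp_eq_zsmul s ht (subset_compl_singleton.1 hzJ)
    hJcard (by rw [Fin.range_cons, coe_image, coe_univ, Set.image_univ])
  rw [hε, map_zsmul]
  exact zsmul_mem (Submodule.subset_span (Set.mem_range_self (⟨_, hJ⟩ : powersetCard b {z}ᶜ))) ε

theorem blockAvg_mem_span_blockInvariant (hs : ∀ j, blk (s j) = j) (z : β)
    {f : MvPolynomial α ℚ} (hf : f ∈ vandermondeSpan α b) :
    blockAvg blk f ∈ Submodule.span ℚ (Set.range fun J : powersetCard b ({z}ᶜ : Finset β) =>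
      blockInvariant blk s z J) := by
  rw [← Submodule.mem_comap]
  refine Submodule.span_le.2 ?_ hf
  rintro _ ⟨t, rfl⟩
  rw [SetLike.mem_coe, Submodule.mem_comap, vandermondePoly_eq_sum_cons (s z), map_sum]
  refine sum_mem fun i _ => ?_
  rw [map_zsmul]
  exact zsmul_mem (blockAvg_vandermondePoly_cons_mem_span hs z _) _

end BlockInvariant

/-! ### Dual functionals -/

section MarkedPoint

variable {β : Type*} [Fintype β] [DecidableEq β]

/-- A point whose coordinates are distinct and nonzero at the elements of `J` and zero elsewhere. -/
def markedPoint (J : Finset β) (j : β) : ℚ :=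
  if j ∈ J then (Fintype.equivFin β j : ℚ) + 1 else 0

theorem markedPoint_eq_iff {J : Finset β} {i j : β} :
    markedPoint J i = markedPoint J j ↔ i = j ∨ i ∉ J ∧ j ∉ J := by
  have hpos : ∀ k : β, (Fintype.equivFin β k : ℚ) + 1 ≠ 0 := fun k => by positivity
  by_cases hi : i ∈ J <;> by_cases hj : j ∈ J
  · simp [markedPoint, hi, hj, Fin.val_inj]
  · simp [markedPoint, hi, hj, hpos, ne_of_mem_of_not_mem hi hj]
  · simp [markedPoint, hi, hj, (hpos _).symm, (ne_of_mem_of_not_mem hj hi).symm]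
  · simp [markedPoint, hi, hj]

/-- The Vandermonde determinant of `markedPoint I`, with coordinates relabelled along `η`, in the
coordinates indexed by `insert z J`. -/
def markedDet (I : Finset β) (η : β → β) (z : β) (J : Finset β) : ℚ :=
  (Matrix.vandermonde (markedPoint I ∘ η ∘ consEnum z J)).det

variable {I J : Finset β} {z : β} {η : β → β}

theorem markedDet_eq_zero {i j : β} (hi : i ∈ insert z J) (hj : j ∈ insert z J) (hij : i ≠ j)
    (h : η i = η j ∨ η i ∉ I ∧ η j ∉ I) : markedDet I η z J = 0 := by
  rw [← mem_coe, coe_insert, ← range_consEnum] at hi hj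
  obtain ⟨k, rfl⟩ := hi
  obtain ⟨l, rfl⟩ := hj
  exact Matrix.det_vandermonde_eq_zero_iff.2
    ⟨k, l, markedPoint_eq_iff.2 h, fun hkl => hij (hkl ▸ rfl)⟩

theorem markedDet_self_ne_zero (hz : z ∉ J) : markedDet J id z J ≠ 0 := by
  refine Matrix.det_vandermonde_ne_zero_iff.2 fun k l hkl => ?_
  rcases markedPoint_eq_iff.1 hkl with h | ⟨hk, hl⟩
  · exact injective_consEnum hz h
  · have hmem : ∀ i, consEnum z J i ∉ J → consEnum z J i = z := fun i hi => by
      have : consEnum z J i ∈ insert z (J : Set β) := range_consEnum z J ▸ Set.mem_range_self i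
      exact this.resolve_right hi
    exact injective_consEnum hz ((hmem k hk).trans (hmem l hl).symm)

theorem markedDet_congr {θ : β → β} (h : ∀ j ∈ insert z J, η j = θ j) :
    markedDet I η z J = markedDet I θ z J := by
  have hcomp : η ∘ consEnum z J = θ ∘ consEnum z J := funext fun k => h _ <| by
    rw [← mem_coe, coe_insert, ← range_consEnum]
    exact Set.mem_range_self k
  rw [markedDet, hcomp, markedDet]

theorem markedDet_perm (hz : z ∉ J) {γ : Equiv.Perm β} (hγ : γ.support ⊆ J) :
    markedDet I γ z J = (γ.sign : ℤ) * markedDet I id z J := by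
  have hsupp : (γ.support : Set β) ⊆ Set.range (consEnum z J) := by
    rw [range_consEnum]
    exact (coe_subset.2 hγ).trans (Set.subset_insert z ↑J)
  obtain ⟨σ, hσ, hsign⟩ := exists_perm_comp_eq_and_sign_eq (injective_consEnum hz) hsupp
  rw [markedDet, hσ, ← Function.comp_assoc, det_vandermonde_comp_perm, hsign]
  rfl

/- If the cycle `γ` is applied at some but not all of its points in `insert z J`, then two
coordinates collide: a shifted point meets an unshifted one, or is moved out of `J` and meets
`z`. -/
theorem markedDet_piecewise_eq_zero {γ : Equiv.Perm β} (hγ : γ.IsCycle) (hγz : γ z = z)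
    (hz : z ∉ J) {S : Finset β} (hne : (J ∩ γ.support ∩ S).Nonempty)
    (hsupp : J ∩ γ.support ∩ S ≠ γ.support) : markedDet J (S.piecewise γ id) z J = 0 := by
  obtain ⟨x, hx, hγx⟩ := exists_mem_apply_notMem_of_isCycle hγ
    (inter_subset_left.trans inter_subset_right) hne hsupp
  simp only [mem_inter, Equiv.Perm.apply_mem_support] at hx hγx
  obtain ⟨⟨hxJ, hxγ⟩, hxS⟩ := hx
  have hηx : S.piecewise γ id x = γ x := piecewise_eq_of_mem _ _ _ hxS
  by_cases hγxJ : γ x ∈ J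
  · have hηγx : S.piecewise γ id (γ x) = γ x :=
      piecewise_eq_of_notMem _ _ _ fun h => hγx ⟨⟨hγxJ, hxγ⟩, h⟩
    exact markedDet_eq_zero (mem_insert_of_mem hxJ) (mem_insert_of_mem hγxJ)
      (Equiv.Perm.mem_support.1 hxγ).symm (.inl (hηx.trans hηγx.symm))
  · have hηz : S.piecewise γ id z = z := by simp [piecewise, hγz]
    exact markedDet_eq_zero (mem_insert_of_mem hxJ) (mem_insert_self z J)
      (ne_of_mem_of_not_mem hxJ hz) (.inr ⟨by rwa [hηx], by rwa [hηz]⟩)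

theorem markedDet_piecewise {γ : Equiv.Perm β} (hγ : γ.IsCycle) (hγz : γ z = z) (hz : z ∉ J)
    (S : Finset β) :
    markedDet J (S.piecewise γ id) z J = markedDet J id z J *
      ((if J ∩ γ.support ∩ S = ∅ then 1 else 0) +
        (γ.sign : ℤ) * if J ∩ γ.support ∩ S = γ.support then 1 else 0) := by
  have hsupp : γ.support ≠ ∅ := by simpa using hγ.ne_one
  by_cases hempty : J ∩ γ.support ∩ S = ∅
  · have hη : ∀ j ∈ insert z J, S.piecewise γ id j = id j := by
      intro j hj
      by_cases hγj : γ j = j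
      · simp [piecewise, hγj]
      · refine piecewise_eq_of_notMem _ _ _ fun hjS => notMem_empty j (hempty ▸ ?_)
        have hjJ : j ∈ J := mem_of_mem_insert_of_ne hj fun h => hγj (h ▸ hγz)
        simp [hjJ, hγj, hjS]
    rw [markedDet_congr hη, hempty, if_pos rfl, if_neg hsupp.symm]
    ring
  rw [if_neg hempty, zero_add]
  by_cases hfull : J ∩ γ.support ∩ S = γ.support
  · have hη : ∀ j ∈ insert z J, S.piecewise γ id j = γ j := by
      intro j _
      by_cases hγj : γ j = j
      · simp [piecewise, hγj]
      · have hj : j ∈ J ∩ γ.support ∩ S := by rwa [hfull, Equiv.Perm.mem_support]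
        exact piecewise_eq_of_mem _ _ _ (mem_of_mem_inter_right hj)
    have hJ : γ.support ⊆ J := hfull ▸ inter_subset_left.trans inter_subset_left
    rw [markedDet_congr hη, markedDet_perm hz hJ, if_pos hfull, mul_one, mul_comm]
  · rw [markedDet_piecewise_eq_zero hγ hγz hz (nonempty_iff_ne_empty.2 hempty) hfull,
      if_neg hfull, mul_zero, mul_zero]

end MarkedPoint

section DualFunctional

variable {α β : Type*} [Fintype β] [DecidableEq β]

/-- Normalized evaluation at `markedPoint J ∘ blk`. For fixed `z` these functionals are dual to the
polynomials `blockInvariant blk s z J`. -/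
def dualFunctional (blk : α → β) (z : β) (J : Finset β) : MvPolynomial α ℚ →ₗ[ℚ] ℚ :=
  (markedDet J id z J)⁻¹ • (aeval (markedPoint J ∘ blk)).toLinearMap

variable [Fintype α] [DecidableEq α] {blk : α → β} {s : β → α} {z : β} {I J : Finset β}

theorem dualFunctional_blockInvariant (hs : ∀ j, blk (s j) = j) (hI : z ∉ I) (hJ : z ∉ J)
    (hcard : #I = #J) :
    dualFunctional blk z I (blockInvariant blk s z J) = if I = J then 1 else 0 := by
  have hdet : aeval (markedPoint I ∘ blk) (blockInvariant blk s z J) = markedDet I id z J := by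
    rw [blockInvariant, aeval_comp_blockAvg, aeval_vandermondePoly, markedDet]
    congr 2
    exact funext fun k => congrArg (markedPoint I) (hs _)
  rw [dualFunctional, LinearMap.smul_apply, AlgHom.toLinearMap_apply, hdet, smul_eq_mul]
  split_ifs with h
  · subst h
    exact inv_mul_cancel₀ (markedDet_self_ne_zero hI)
  · obtain ⟨j, hjJ, hjI⟩ := not_subset.1 fun hJI => h (eq_of_subset_of_card_le hJI hcard.le).symm
    have hdet0 : markedDet I id z J = 0 :=
      markedDet_eq_zero (mem_insert_of_mem hjJ) (mem_insert_self z J)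
        (ne_of_mem_of_not_mem hjJ hJ) (.inr ⟨hjI, hI⟩)
    rw [hdet0, mul_zero]

theorem dualFunctional_blockAvg_permAct (g : Equiv.Perm α) :
    dualFunctional blk z J (blockAvg blk (permAct g (blockInvariant blk s z J))) =
      (markedDet J id z J)⁻¹ *
        𝔼 h ∈ blockPerms blk, markedDet J (fun j => blk (g (h (s j)))) z J := by
  rw [dualFunctional, LinearMap.smul_apply, AlgHom.toLinearMap_apply, smul_eq_mul,
    aeval_comp_blockAvg, aeval_permAct, blockInvariant, aeval_blockAvg]
  simp only [permAct_vandermondePoly, aeval_vandermondePoly]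
  rfl

variable {g : Equiv.Perm α} {γ : Equiv.Perm β}

theorem blk_apply_blockPerm_section (hs : ∀ j, blk (s j) = j) (hg : ∀ j, g (s j) = s (γ j))
    (hg' : ∀ a, a ∉ Set.range s → g a = a) {h : Equiv.Perm α} (hh : h ∈ blockPerms blk) :
    (fun j => blk (g (h (s j)))) = ({j | h (s j) = s j} : Finset β).piecewise γ id := by
  have hblk : ∀ j, blk (h (s j)) = j := fun j => (mem_blockPerms.1 hh _).trans (hs j)
  ext j
  by_cases hj : h (s j) = s j
  · rw [piecewise_eq_of_mem _ _ _ (by simpa using hj), hj, hg, hs]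
  · have hrange : h (s j) ∉ Set.range s := fun ⟨i, hi⟩ =>
      hj (by rw [← hi, ← hs i, hi, hblk])
    rw [piecewise_eq_of_notMem _ _ _ (by simpa using hj), hg' _ hrange, hblk, id]

theorem dualFunctional_blockAvg_permAct_of_isCycle (hs : ∀ j, blk (s j) = j)
    (hg : ∀ j, g (s j) = s (γ j)) (hg' : ∀ a, a ∉ Set.range s → g a = a) (hγ : γ.IsCycle)
    (hγz : γ z = z) (hz : z ∉ J) :
    dualFunctional blk z J (blockAvg blk (permAct g (blockInvariant blk s z J))) =
      ∏ j ∈ J ∩ γ.support, ((#{a | blk a = j} - 1) / #{a | blk a = j} : ℚ) +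
        if γ.support ⊆ J then
          ((γ.sign : ℤ) : ℚ) * (∏ j ∈ γ.support, (#{a | blk a = j} : ℚ))⁻¹ else 0 := by
  have hdet : ∀ h ∈ blockPerms blk, markedDet J (fun j => blk (g (h (s j)))) z J =
      markedDet J id z J * ((if ∀ j ∈ J ∩ γ.support, h (s j) ≠ s j then 1 else 0) +
        if γ.support ⊆ J then
          ((γ.sign : ℤ) : ℚ) * if ∀ j ∈ γ.support, h (s j) = s j then 1 else 0 else 0) := by
    intro h hh
    rw [blk_apply_blockPerm_section hs hg hg' hh, markedDet_piecewise hγ hγz hz]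
    have hempty : J ∩ γ.support ∩ ({j | h (s j) = s j} : Finset β) = ∅ ↔
        ∀ j ∈ J ∩ γ.support, h (s j) ≠ s j := by
      simp [eq_empty_iff_forall_notMem]
    have hfull : J ∩ γ.support ∩ ({j | h (s j) = s j} : Finset β) = γ.support ↔
        γ.support ⊆ J ∧ ∀ j ∈ γ.support, h (s j) = s j := by
      rw [inter_comm J, inter_assoc, inter_eq_left, subset_inter_iff]
      simp [subset_iff]
    simp only [hempty, hfull, ite_and, mul_ite, mul_zero]
  rw [dualFunctional_blockAvg_permAct, expect_congr rfl hdet, ← mul_expect,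
    inv_mul_cancel_left₀ (markedDet_self_ne_zero hz), expect_add_distrib,
    expect_blockPerms_forall_apply_section_ne hs]
  split_ifs
  · rw [← mul_expect, expect_blockPerms_forall_apply_section_eq hs]
  · rw [expect_const_zero]

theorem trace_blockAvg_comp_permAct_eq_sum (hs : ∀ j, blk (s j) = j)
    (hg : ∀ j, g (s j) = s (γ j)) (hg' : ∀ a, a ∉ Set.range s → g a = a) (hγ : γ.IsCycle)
    (hγz : γ z = z) {b : ℕ}
    (hW : ∀ f ∈ vandermondeSpan α b, (blockAvg blk ∘ₗ permAct g) f ∈ vandermondeSpan α b) :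
    LinearMap.trace ℚ (vandermondeSpan α b) ((blockAvg blk ∘ₗ permAct g).restrict hW) =
      ∑ J ∈ powersetCard b ({z}ᶜ : Finset β),
        (∏ j ∈ J ∩ γ.support, ((#{a | blk a = j} - 1) / #{a | blk a = j} : ℚ) +
          if γ.support ⊆ J then
            ((γ.sign : ℤ) : ℚ) * (∏ j ∈ γ.support, (#{a | blk a = j} : ℚ))⁻¹ else 0) := by
  have : Module.Finite ℚ (vandermondeSpan α b) := .span_of_finite ℚ (Set.finite_range _)
  have hmem : ∀ J : powersetCard b ({z}ᶜ : Finset β), z ∉ J.1 ∧ #J.1 = b := fun J =>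
    (mem_powersetCard.1 J.2).imp_left subset_compl_singleton.1
  rw [trace_restrict_eq_sum_of_dual (D := fun J : powersetCard b ({z}ᶜ : Finset β) =>
      blockInvariant blk s z J) (ε := fun J => dualFunctional blk z J) hW
      (fun J => blockInvariant_mem_vandermondeSpan z (hmem J).2),
    ← sum_coe_sort (powersetCard b _)]
  · exact sum_congr rfl fun J _ =>
      dualFunctional_blockAvg_permAct_of_isCycle hs hg hg' hγ hγz (hmem J).1
  · intro I J
    rw [dualFunctional_blockInvariant hs (hmem I).1 (hmem J).1 ((hmem I).2.trans (hmem J).2.symm)]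
    simp only [Subtype.ext_iff]
  · exact fun f hf =>
      blockAvg_mem_span_blockInvariant hs z (permAct_mem_vandermondeSpan g hf)

theorem sphericalFunction_hook_l_le_b_add_m_general (hs : ∀ j, blk (s j) = j)
    (hg : ∀ j, g (s j) = s (γ j)) (hg' : ∀ a, a ∉ Set.range s → g a = a) (hγ : γ.IsCycle)
    {b m ℓ : ℕ} (hm : Fintype.card β = b + m + 1) (hℓ : #γ.support = ℓ) (hℓm : ℓ ≤ b + m)
    (hW : ∀ f ∈ vandermondeSpan α b, (blockAvg blk ∘ₗ permAct g) f ∈ vandermondeSpan α b) :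
    LinearMap.trace ℚ (vandermondeSpan α b) ((blockAvg blk ∘ₗ permAct g).restrict hW) =
      (∏ i ∈ γ.support, (#{a | blk a = i} : ℚ))⁻¹ *
        ((∑ k ∈ range (min m ℓ + 1), poch ((b : ℚ) + 1) (m - k) / ((m - k) ! : ℚ) *
            esymVal γ.support (ℓ - k) (fun i => (#{a | blk a = i} : ℚ) - 1)) +
          (-1 : ℚ) ^ (ℓ + 1) * poch ((b : ℚ) - ℓ + 1) m / (m ! : ℚ)) := by
  obtain ⟨z, hz⟩ : ∃ z, z ∉ γ.support := by
    by_contra! h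
    rw [eq_univ_iff_forall.2 h, card_univ] at hℓ
    omega
  have hsupp : γ.support ⊆ {z}ᶜ := subset_compl_singleton.2 hz
  have hcard : #({z}ᶜ : Finset β) = b + m := by rw [card_compl, card_singleton, hm]; rfl
  have hne : ∀ j ∈ γ.support, (#{a | blk a = j} : ℚ) ≠ 0 := fun j _ =>
    Nat.cast_ne_zero.2 (card_ne_zero_of_mem (mem_filter.2 ⟨mem_univ (s j), hs j⟩))
  rw [trace_blockAvg_comp_permAct_eq_sum hs hg hg' hγ (Equiv.Perm.notMem_support.1 hz),
    sum_add_distrib, sum_powersetCard_prod_inter_sub_one_div hsupp hne,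
    sum_powersetCard_ite_subset hsupp, hcard, hℓ, sum_range_choose_mul_eq_sum_poch hℓm,
    ← poch_natCast_sub_add_one_div_factorial hℓm, hγ.sign, hℓ]
  push_cast
  ring

end DualFunctional

/-! ### Consecutive blocks -/

theorem Delta_eq_vandermondePoly {N b : ℕ} (t : Fin (b + 1) → Fin N) :
    Delta t = vandermondePoly (t ∘ Fin.rev) := by
  rw [vandermondePoly, Matrix.det_vandermonde, Delta,
    ← prod_finset_product {q : Fin (b + 1) × Fin (b + 1) | q.1 < q.2} univ Ioi (by simp)
      (f := fun q => X ((t ∘ Fin.rev) q.2) - X ((t ∘ Fin.rev) q.1))]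
  refine prod_equiv ((Equiv.prodComm _ _).trans (Fin.revPerm.prodCongr Fin.revPerm)) ?_ ?_ <;>
    simp

theorem hookSpan_eq_vandermondeSpan (N b : ℕ) : hookSpan N b = vandermondeSpan (Fin N) b := by
  refine le_antisymm (Submodule.span_mono ?_) (Submodule.span_le.2 ?_)
  · rintro _ ⟨t, -, rfl⟩
    exact ⟨t ∘ Fin.rev, (Delta_eq_vandermondePoly t).symm⟩
  · rintro _ ⟨t, rfl⟩
    by_cases ht : t.Injective
    · have hsorted : StrictMono (t ∘ Tuple.sort t) :=
        (Tuple.monotone_sort t).strictMono_of_injective (ht.comp (Tuple.sort t).injective)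
      have hΔ : vandermondePoly t =
          (Equiv.Perm.sign (Fin.revPerm.trans (Tuple.sort t)).symm : ℤ) •
            Delta (t ∘ Tuple.sort t) := by
        rw [Delta_eq_vandermondePoly, ← vandermondePoly_comp_perm]
        congr 1
        ext k
        simp
      rw [hΔ]
      have hmem : Delta (t ∘ Tuple.sort t) ∈ hookSpan N b :=
        Submodule.subset_span ⟨_, hsorted, rfl⟩
      exact zsmul_mem hmem _
    · rw [vandermondePoly_eq_zero_of_not_injective ht]
      exact zero_mem _

theorem emb_eq_finSigmaFinEquiv (n : Fin p → ℕ) (j : Fin p) (i : Fin (n j)) :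
    emb n j i = finSigmaFinEquiv ⟨j, i⟩ := by
  have hfilter : ({t | t < j} : Finset (Fin p)) = univ.map (Fin.castLEEmb j.isLt.le) := by
    ext t
    simp only [mem_filter_univ, mem_map, mem_univ, true_and]
    exact ⟨fun h => ⟨⟨t, h⟩, rfl⟩, by rintro ⟨i, rfl⟩; exact i.isLt⟩
  ext
  rw [finSigmaFinEquiv_apply]
  simp only [emb, hfilter, sum_map, Fin.castLEEmb_apply]

theorem emb_injective (n : Fin p → ℕ) (j : Fin p) : (emb n j).Injective := fun i i' h =>
  Fin.ext (by simpa [emb] using h)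

/-- The label of the consecutive block containing a given index. -/
def blockIndex (n : Fin p → ℕ) (a : Fin (∑ t, n t)) : Fin p :=
  (finSigmaFinEquiv.symm a).1

theorem blockIndex_emb (n : Fin p → ℕ) (j : Fin p) (i : Fin (n j)) :
    blockIndex n (emb n j i) = j := by
  rw [blockIndex, emb_eq_finSigmaFinEquiv, Equiv.symm_apply_apply]

theorem blockIndex_eq_iff {n : Fin p → ℕ} {a : Fin (∑ t, n t)} {j : Fin p} :
    blockIndex n a = j ↔ ∃ i, a = emb n j i := by
  refine ⟨?_, fun ⟨i, hi⟩ => hi ▸ blockIndex_emb n j i⟩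
  rintro rfl
  exact ⟨(finSigmaFinEquiv.symm a).2,
    ((emb_eq_finSigmaFinEquiv n _ _).trans (finSigmaFinEquiv.apply_symm_apply a)).symm⟩

theorem card_filter_blockIndex_eq (n : Fin p → ℕ) (j : Fin p) :
    #{a | blockIndex n a = j} = n j := by
  have himage : ({a | blockIndex n a = j} : Finset (Fin (∑ t, n t))) = univ.image (emb n j) := by
    ext a
    rw [mem_filter_univ, blockIndex_eq_iff]
    simp only [mem_image, mem_univ, true_and, eq_comm (a := a)]
  rw [himage, card_image_of_injective _ (emb_injective n j), card_univ, Fintype.card_fin]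

theorem youngGroup_eq_blockPerms (n : Fin p → ℕ) : youngGroup n = blockPerms (blockIndex n) := by
  ext w
  simp only [youngGroup, mem_filter_univ, mem_blockPerms, ← blockIndex_eq_iff]
  refine ⟨fun h a => ?_, fun h j i => (h _).trans (blockIndex_emb n j i)⟩
  obtain ⟨i, hi⟩ := blockIndex_eq_iff.1 (rfl : blockIndex n a = blockIndex n a)
  exact (congrArg (fun a' => blockIndex n (w a')) hi).trans (h _ i)

theorem rho_eq_blockAvg (n : Fin p → ℕ) : rho n = blockAvg (blockIndex n) := by
  rw [rho, youngGroup_eq_blockPerms, blockAvg]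

theorem support_cycleRange {i : Fin p} (hi : (i : ℕ) ≠ 0) :
    (Fin.cycleRange i).support = firstL p (i + 1) := by
  ext j
  simp only [Equiv.Perm.mem_support, firstL, mem_filter_univ, Nat.lt_succ_iff, Fin.val_fin_le]
  rcases le_or_gt j i with h | h
  · refine iff_of_true (fun heq => ?_) h
    have hval := Fin.coe_cycleRange_of_le h
    rw [heq] at hval
    split_ifs at hval <;> omega
  · exact iff_of_false (not_not.2 (Fin.cycleRange_of_gt h)) h.not_ge

theorem card_firstL {ℓ : ℕ} (hℓ : ℓ ≤ p) : #(firstL p ℓ) = ℓ := by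
  rw [firstL, Fin.card_filter_val_lt, min_eq_right hℓ]

theorem apply_eq_apply_cycleRange {n : Fin p → ℕ} (hn : ∀ j, 0 < n j) {i : Fin p}
    {g : Equiv.Perm (Fin (∑ t, n t))}
    (hg1 : ∀ j k : Fin p, (k : ℕ) = (j : ℕ) + 1 → (k : ℕ) < i + 1 →
      g (emb n j ⟨0, hn j⟩) = emb n k ⟨0, hn k⟩)
    (hg2 : ∀ j j' : Fin p, (j : ℕ) = i → (j' : ℕ) = 0 →
      g (emb n j ⟨0, hn j⟩) = emb n j' ⟨0, hn j'⟩)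
    (hg3 : ∀ a, (∀ j : Fin p, (j : ℕ) < i + 1 → a ≠ emb n j ⟨0, hn j⟩) → g a = a) (j : Fin p) :
    g (emb n j ⟨0, hn j⟩) = emb n (i.cycleRange j) ⟨0, hn _⟩ := by
  rcases lt_trichotomy j i with h | h | h
  · have hval := Fin.coe_cycleRange_of_lt h
    exact hg1 _ _ hval (by omega)
  · have hval := Fin.coe_cycleRange_of_le h.le
    rw [if_pos h] at hval
    exact hg2 _ _ (congrArg Fin.val h) hval
  · rw [Fin.cycleRange_of_gt h]
    refine hg3 _ fun k hk heq => ?_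
    have hjk : j = k := by rw [← blockIndex_emb n j ⟨0, hn j⟩, heq, blockIndex_emb]
    omega

theorem sphericalFunction_hook_l_le_b_add_m (p b ℓ : ℕ) (n : Fin p → ℕ) (hn : ∀ j, 0 < n j)
    (hm : b + 2 ≤ p) (hℓ2 : 2 ≤ ℓ) (hℓp : ℓ ≤ p - 1)
    (g : Equiv.Perm (Fin (∑ t, n t)))
    (hg1 : ∀ j k : Fin p, (k : ℕ) = (j : ℕ) + 1 → (k : ℕ) < ℓ →
      g (emb n j ⟨0, hn j⟩) = emb n k ⟨0, hn k⟩)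
    (hg2 : ∀ j j' : Fin p, (j : ℕ) = ℓ - 1 → (j' : ℕ) = 0 →
      g (emb n j ⟨0, hn j⟩) = emb n j' ⟨0, hn j'⟩)
    (hg3 : ∀ a, (∀ j : Fin p, (j : ℕ) < ℓ → a ≠ emb n j ⟨0, hn j⟩) → g a = a)
    (hW : ∀ f ∈ hookSpan (∑ t, n t) b,
      ((rho n).comp (permAct g)) f ∈ hookSpan (∑ t, n t) b) :
    LinearMap.trace ℚ (hookSpan (∑ t, n t) b) (((rho n).comp (permAct g)).restrict hW)
      = (∏ i ∈ firstL p ℓ, (n i : ℚ))⁻¹ *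
        ((∑ k ∈ Finset.range (min (p - b - 1) ℓ + 1),
            poch ((b : ℚ) + 1) (p - b - 1 - k) / (Nat.factorial (p - b - 1 - k)) *
              esymVal (firstL p ℓ) (ℓ - k) (fun i => (n i : ℚ) - 1))
          + (-1 : ℚ) ^ (ℓ + 1) * poch ((b : ℚ) - (ℓ : ℚ) + 1) (p - b - 1)
              / (Nat.factorial (p - b - 1))) := by
  obtain ⟨i, rfl⟩ : ∃ i : Fin p, ℓ = i + 1 :=
    ⟨⟨ℓ - 1, by omega⟩, (Nat.sub_add_cancel (by omega)).symm⟩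
  have hi : (i : ℕ) ≠ 0 := by omega
  have : NeZero p := ⟨by omega⟩
  have hsupp : i.cycleRange.support = firstL p (i + 1) := support_cycleRange hi
  have hfix (a) (ha : a ∉ Set.range fun j => emb n j ⟨0, hn j⟩) : g a = a :=
    hg3 a fun j _ h => ha ⟨j, h.symm⟩
  revert hW
  rw [rho_eq_blockAvg, hookSpan_eq_vandermondeSpan]
  intro hW
  have htrace := sphericalFunction_hook_l_le_b_add_m_general (m := p - b - 1)
    (fun j => blockIndex_emb n j ⟨0, hn j⟩) (apply_eq_apply_cycleRange hn hg1 hg2 hg3) hfix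
    (Fin.isCycle_cycleRange fun h => hi (by simp [h])) (by rw [Fintype.card_fin]; omega)
    (by rw [hsupp, card_firstL i.isLt]) (by omega) hW
  simpa only [hsupp, card_filter_blockIndex_eq] using htrace

end
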